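/- For every MTL sentence φ (over atomic propositions identified with nullary fluents): φ is valid in MTL (pointwise semantics over timed words) if and only if φ is valid as a trace formula in t-ESG (i.e., w, ⟨⟩, τ ⊨ φ for every t-ESG world w and every trace τ). -/

import Mathlib

namespace TESG

/-! ### Sorts, standard names, symbols -/

inductive Sort3 : Type
  | obj | act | clk
  deriving DecidableEq

/-- A standard name: a sort together with a numeric identifier
(there are countably infinitely many standard names of each sort). -/
structure Name : Type where
  sort : Sort3
  id : ℕ
  deriving DecidableEq

/-- A function symbol (with a result sort and a fluent/rigid flag). -/
structure FuncSym : Type where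
  id : ℕ
  sort : Sort3
  fluent : Bool
  deriving DecidableEq

/-- Predicate symbols: the distinguished fluents `poss`, `reset` and the
clock-constraint predicate `gc`, plus ordinary fluent (`fl`) and rigid (`rg`)
predicate symbols. -/
inductive PredSym : Type
  | poss | reset | gc
  | fl (id : ℕ)
  | rg (id : ℕ)
  deriving DecidableEq

def PredSym.isFluent : PredSym → Bool
  | .rg _ => false
  | _ => true

inductive CmpOp : Type
  | lt | le | eq | ge | gt
  deriving DecidableEq

def CmpOp.holds : CmpOp → ℝ → ℝ → Prop
  | .lt, a, b => a < b
  | .le, a, b => a ≤ b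
  | .eq, a, b => a = b
  | .ge, a, b => b ≤ a
  | .gt, a, b => b < a

/-- Open, closed or half-closed intervals with natural number endpoints
(`hi = none` means `∞`). -/
structure Ival : Type where
  lo : ℕ
  hi : Option ℕ
  loOpen : Bool
  hiOpen : Bool
  deriving DecidableEq

def Ival.memR (I : Ival) (x : ℝ) : Prop :=
  (if I.loOpen then (I.lo : ℝ) < x else (I.lo : ℝ) ≤ x) ∧
  (match I.hi with
   | none => True
   | some h => if I.hiOpen then x < (h : ℝ) else x ≤ (h : ℝ))

def Ival.unbounded : Ival := ⟨0, none, false, false⟩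

/-! ### Terms -/

mutual
  inductive Term : Type
    | name (n : Name)
    | app (f : FuncSym) (args : ArgList)
  inductive ArgList : Type
    | nil
    | cons (t : Term) (ts : ArgList)
end

def ArgList.ofNames : List Name → ArgList
  | [] => .nil
  | n :: ns => .cons (.name n) (ArgList.ofNames ns)

/-! ### Formulas (situation formulas, trace formulas) and Golog programs.
Quantification is understood substitutionally over standard names and is
represented by binding a standard name (higher-order abstract syntax). -/

mutual
  inductive SitForm : Type
    | pred (P : PredSym) (args : ArgList)
    | eq (t₁ t₂ : Term)
    | clockCmp (c : Term) (op : CmpOp) (r : ℚ)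
    | constCmp (r : ℚ) (op : CmpOp) (r' : ℚ)
    | and (α β : SitForm)
    | not (α : SitForm)
    | all (s : Sort3) (body : Name → SitForm)
    | box (α : SitForm)
    | after (δ : Prog) (α : SitForm)
    | during (δ : Prog) (φ : TraceForm)
    | duringFin (δ : Prog) (φ : TraceForm)
  inductive TraceForm : Type
    | base (α : SitForm)
    | and (φ ψ : TraceForm)
    | not (φ : TraceForm)
    | all (s : Sort3) (body : Name → TraceForm)
    | untl (I : Ival) (φ ψ : TraceForm)
  inductive Prog : Type
    | act (t : Term)
    | test (α : SitForm)
    | seq (δ₁ δ₂ : Prog)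
    | choice (δ₁ δ₂ : Prog)
    | conc (δ₁ δ₂ : Prog)
    | star (δ : Prog)
end

def SitForm.orS (α β : SitForm) : SitForm := .not (.and (.not α) (.not β))
def SitForm.impS (α β : SitForm) : SitForm := .not (.and α (.not β))
def SitForm.iffS (α β : SitForm) : SitForm := .and (α.impS β) (β.impS α)
def trueSit : SitForm := .all .obj fun n => .eq (.name n) (.name n)
def falseSit : SitForm := .not trueSit
def nilProg : Prog := .test trueSit

/-! ### Timed traces.
A finite timed trace is a list of (time point, action standard name) pairs. -/

abbrev FinTrace := List (ℝ × ℕ)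

def lastTime (z : FinTrace) : ℝ := ((z.getLast?).map Prod.fst).getD 0

def TraceWFFrom (t₀ : ℝ) (z : FinTrace) : Prop :=
  List.Chain' (· ≤ ·) (t₀ :: z.map Prod.fst)

def TraceWF : FinTrace → Prop := TraceWFFrom 0

def untimed (z : FinTrace) : List ℕ := z.map Prod.snd

/-! ### Worlds -/

structure World : Type where
  fval : FuncSym → List Name → FinTrace → Name
  pval : PredSym → List Name → FinTrace → Bool
  cval : ℕ → FinTrace → ℝ
  fval_sort : ∀ f args z, (fval f args z).sort = f.sort
  rigid_fun : ∀ f : FuncSym, f.fluent = false → ∀ args z z', fval f args z = fval f args z'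
  rigid_pred : ∀ P : PredSym, P.isFluent = false → ∀ args z z', pval P args z = pval P args z'
  unique_names : ∀ f f' args args' z z', f.sort ≠ Sort3.obj → f'.sort ≠ Sort3.obj →
      (f, args) ≠ (f', args') → fval f args z ≠ fval f' args' z'
  clock_init : ∀ c, cval c [] = 0
  clock_prog : ∀ c z t p, TraceWF (z ++ [(t, p)]) →
      cval c (z ++ [(t, p)]) =
        (if pval PredSym.reset [Name.mk Sort3.clk c] (z ++ [(t, p)]) = true then 0
         else cval c z + (t - lastTime z))

/-! ### Denotation of ground terms -/

mutual
  def denot (w : World) (z : FinTrace) : Term → Name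
    | .name n => n
    | .app f args => w.fval f (denotArgs w z args) z
  def denotArgs (w : World) (z : FinTrace) : ArgList → List Name
    | .nil => []
    | .cons t ts => denot w z t :: denotArgs w z ts
end

/-! ### Truth of static situation formulas at a time-extended trace `z · t`
(fluent values are observed at action occurrences, i.e. at `z`; clock values
are advanced to the time point `t`). -/

def cvalAt (w : World) (z : FinTrace) (t : ℝ) (c : ℕ) : ℝ :=
  w.cval c z + (t - lastTime z)

def StaticSatT (w : World) (z : FinTrace) (t : ℝ) : SitForm → Prop
  | .pred P args => w.pval P (denotArgs w z args) z = true
  | .eq t₁ t₂ => denot w z t₁ = denot w z t₂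
  | .clockCmp c op r =>
      (denot w z c).sort = Sort3.clk ∧ op.holds (cvalAt w z t (denot w z c).id) (r : ℝ)
  | .constCmp r op r' => op.holds (r : ℝ) (r' : ℝ)
  | .and α β => StaticSatT w z t α ∧ StaticSatT w z t β
  | .not α => ¬ StaticSatT w z t α
  | .all s body => ∀ k : ℕ, StaticSatT w z t (body (Name.mk s k))
  | .box _ => False
  | .after _ _ => False
  | .during _ _ => False
  | .duringFin _ _ => False

/-! ### Program transition semantics -/

/-- Final configurations (`t` is the pending time point of the configuration). -/
inductive Final (w : World) (z : FinTrace) (t : ℝ) : Prog → Prop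
  | test {α} : StaticSatT w z t α → Final w z t (.test α)
  | seq {δ₁ δ₂} : Final w z t δ₁ → Final w z t δ₂ → Final w z t (.seq δ₁ δ₂)
  | choiceL {δ₁ δ₂} : Final w z t δ₁ → Final w z t (.choice δ₁ δ₂)
  | choiceR {δ₁ δ₂} : Final w z t δ₂ → Final w z t (.choice δ₁ δ₂)
  | star {δ} : Final w z t (.star δ)
  | conc {δ₁ δ₂} : Final w z t δ₁ → Final w z t δ₂ → Final w z t (.conc δ₁ δ₂)

/-- Action step of the transition semantics, taken at the time point `t`. -/
inductive TransA (w : World) (z : FinTrace) (t : ℝ) : Prog → FinTrace → Prog → Prop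
  | act {a : Term} (h : (denot w z a).sort = Sort3.act) :
      TransA w z t (.act a) (z ++ [(t, (denot w z a).id)]) nilProg
  | seqL {δ₁ δ₂ γ z'} : TransA w z t δ₁ z' γ → TransA w z t (.seq δ₁ δ₂) z' (.seq γ δ₂)
  | seqR {δ₁ δ₂ δ' z'} : Final w z t δ₁ → TransA w z t δ₂ z' δ' → TransA w z t (.seq δ₁ δ₂) z' δ'
  | choiceL {δ₁ δ₂ δ' z'} : TransA w z t δ₁ z' δ' → TransA w z t (.choice δ₁ δ₂) z' δ'
  | choiceR {δ₁ δ₂ δ' z'} : TransA w z t δ₂ z' δ' → TransA w z t (.choice δ₁ δ₂) z' δ'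
  | star {δ γ z'} : TransA w z t δ z' γ → TransA w z t (.star δ) z' (.seq γ (.star δ))
  | concL {δ₁ δ₂ δ' z'} : TransA w z t δ₁ z' δ' → TransA w z t (.conc δ₁ δ₂) z' (.conc δ' δ₂)
  | concR {δ₁ δ₂ δ' z'} : TransA w z t δ₂ z' δ' → TransA w z t (.conc δ₁ δ₂) z' (.conc δ₁ δ')

abbrev Config := FinTrace × Prog

/-- A transition: a time step (to some time point `t` not before the current
time) followed by an action step. -/
def Trans (w : World) (c c' : Config) : Prop :=
  ∃ t : ℝ, lastTime c.1 ≤ t ∧ TransA w c.1 t c.2 c'.1 c'.2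

def FinalC (w : World) (c : Config) : Prop := Final w c.1 (lastTime c.1) c.2

def TransStar (w : World) : Config → Config → Prop :=
  Relation.ReflTransGen (Trans w)

/-! ### Possibly infinite timed traces and program traces -/

inductive TTrace : Type
  | fin (z : FinTrace)
  | inf (π : ℕ → ℝ × ℕ)

def prefixTr (π : ℕ → ℝ × ℕ) (n : ℕ) : FinTrace := (List.range n).map π

def TTrace.len : TTrace → ℕ∞
  | .fin z => (z.length : ℕ∞)
  | .inf _ => ⊤

def TTrace.takeFin : TTrace → ℕ → FinTrace
  | .fin z, n => z.take n
  | .inf π, n => prefixTr π n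

def TTrace.drop : TTrace → ℕ → TTrace
  | .fin z, n => .fin (z.drop n)
  | .inf π, n => .inf (fun i => π (i + n))

def TTrace.WF : TTrace → Prop
  | .fin z => TraceWF z
  | .inf π => (∀ i, 0 ≤ (π i).1) ∧ ∀ i j, i ≤ j → (π i).1 ≤ (π j).1

/-- The program traces `‖δ‖ᶻ_w` of a program `δ` starting after the finite
trace `z` in world `w`: the finite traces leading to a final configuration and
the infinite traces of runs that never reach a final configuration. -/
def ProgTrace (w : World) (z : FinTrace) (δ : Prog) : TTrace → Prop
  | .fin z' => ∃ δ', TransStar w (z, δ) (z ++ z', δ') ∧ FinalC w (z ++ z', δ')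
  | .inf π => ∃ ρ : ℕ → Prog, ρ 0 = δ ∧
      (∀ i, Trans w (z ++ prefixTr π i, ρ i) (z ++ prefixTr π (i + 1), ρ (i + 1))) ∧
      (∀ i, ¬ FinalC w (z ++ prefixTr π (i + 1), ρ (i + 1)))

/-! ### Truth of formulas -/

mutual
  def SatS : World → FinTrace → SitForm → Prop
    | w, z, .pred P args => w.pval P (denotArgs w z args) z = true
    | w, z, .eq t₁ t₂ => denot w z t₁ = denot w z t₂
    | w, z, .clockCmp c op r =>
        (denot w z c).sort = Sort3.clk ∧ op.holds (w.cval (denot w z c).id z) (r : ℝ)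
    | _, _, .constCmp r op r' => op.holds (r : ℝ) (r' : ℝ)
    | w, z, .and α β => SatS w z α ∧ SatS w z β
    | w, z, .not α => ¬ SatS w z α
    | w, z, .all s body => ∀ k : ℕ, SatS w z (body (Name.mk s k))
    | w, z, .box α => ∀ z' : FinTrace, TraceWFFrom (lastTime z) z' → SatS w (z ++ z') α
    | w, z, .after δ α => ∀ z' : FinTrace, ProgTrace w z δ (.fin z') → SatS w (z ++ z') α
    | w, z, .during δ φ => ∀ τ : TTrace, ProgTrace w z δ τ → SatT w z τ φ
    | w, z, .duringFin δ φ =>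
        ∀ z' : FinTrace, ProgTrace w z δ (.fin z') → SatT w z (.fin z') φ
  def SatT : World → FinTrace → TTrace → TraceForm → Prop
    | w, z, _, .base α => SatS w z α
    | w, z, τ, .and φ ψ => SatT w z τ φ ∧ SatT w z τ ψ
    | w, z, τ, .not φ => ¬ SatT w z τ φ
    | w, z, τ, .all s body => ∀ k : ℕ, SatT w z τ (body (Name.mk s k))
    | w, z, τ, .untl I φ ψ =>
        ∃ k : ℕ, 1 ≤ k ∧ (k : ℕ∞) ≤ τ.len ∧
          SatT w (z ++ τ.takeFin k) (τ.drop k) ψ ∧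
          I.memR (lastTime (z ++ τ.takeFin k) - lastTime z) ∧
          ∀ m : ℕ, 1 ≤ m → m < k → SatT w (z ++ τ.takeFin m) (τ.drop m) φ
end

/-- `w ⊨ α` -/
def Sat0 (w : World) (α : SitForm) : Prop := SatS w [] α

/-- Validity in t-ESG. -/
def TESGValid (α : SitForm) : Prop := ∀ w : World, Sat0 w α

def SatAll (w : World) (Γ : Set SitForm) : Prop := ∀ α ∈ Γ, Sat0 w α

/-- Entailment in t-ESG. -/
def Entails (Γ : Set SitForm) (α : SitForm) : Prop :=
  ∀ w : World, SatAll w Γ → Sat0 w α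
/-! ### Syntactic classes of terms and formulas -/

mutual
  /-- A term mentioning no clock terms (in particular it is of sort object or
  action, as are all of its subterms). -/
  def Term.noClk : Term → Prop
    | .name n => n.sort ≠ Sort3.clk
    | .app f args => f.sort ≠ Sort3.clk ∧ ArgList.noClk args
  def ArgList.noClk : ArgList → Prop
    | .nil => True
    | .cons t ts => Term.noClk t ∧ ArgList.noClk ts
end

/-- Static situation formulas: no `[·]`, `⟦·⟧` or `□` operators. -/
def SitForm.IsStatic : SitForm → Prop
  | .pred _ _ => True
  | .eq _ _ => True
  | .clockCmp _ _ _ => True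
  | .constCmp _ _ _ => True
  | .and α β => α.IsStatic ∧ β.IsStatic
  | .not α => α.IsStatic
  | .all _ body => ∀ n : Name, (body n).IsStatic
  | .box _ => False
  | .after _ _ => False
  | .during _ _ => False
  | .duringFin _ _ => False

/-- Fluent situation formulas: static, time-invariant (no clock terms, no
mention of the clock-constraint predicate `gc`) and no mention of `poss`. -/
def SitForm.IsFluentF : SitForm → Prop
  | .pred P args => P ≠ PredSym.poss ∧ P ≠ PredSym.gc ∧ ArgList.noClk args
  | .eq t₁ t₂ => Term.noClk t₁ ∧ Term.noClk t₂
  | .clockCmp _ _ _ => False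
  | .constCmp _ _ _ => True
  | .and α β => α.IsFluentF ∧ β.IsFluentF
  | .not α => α.IsFluentF
  | .all s body => s ≠ Sort3.clk ∧ ∀ n : Name, (body n).IsFluentF
  | .box _ => False
  | .after _ _ => False
  | .during _ _ => False
  | .duringFin _ _ => False

/-- Static situation formulas that do not mention `poss`. -/
def SitForm.IsStaticNoPoss : SitForm → Prop
  | .pred P _ => P ≠ PredSym.poss
  | .eq _ _ => True
  | .clockCmp _ _ _ => True
  | .constCmp _ _ _ => True
  | .and α β => α.IsStaticNoPoss ∧ β.IsStaticNoPoss
  | .not α => α.IsStaticNoPoss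
  | .all _ body => ∀ n : Name, (body n).IsStaticNoPoss
  | .box _ => False
  | .after _ _ => False
  | .during _ _ => False
  | .duringFin _ _ => False

/-- Time-invariant (static) situation formulas: no clock terms and no mention
of the clock-constraint predicate `gc`. -/
def SitForm.IsTimeInvS : SitForm → Prop
  | .pred P args => P ≠ PredSym.gc ∧ ArgList.noClk args
  | .eq t₁ t₂ => Term.noClk t₁ ∧ Term.noClk t₂
  | .clockCmp _ _ _ => False
  | .constCmp _ _ _ => True
  | .and α β => α.IsTimeInvS ∧ β.IsTimeInvS
  | .not α => α.IsTimeInvS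
  | .all s body => s ≠ Sort3.clk ∧ ∀ n : Name, (body n).IsTimeInvS
  | .box _ => False
  | .after _ _ => False
  | .during _ _ => False
  | .duringFin _ _ => False

/-! ### Formulas over a pair `(F, C)` of fluents and clocks -/

mutual
  def Term.Over (Fn : Set FuncSym) (C : Set ℕ) : Term → Prop
    | .name n => n.sort = Sort3.clk → n.id ∈ C
    | .app f args => (f.fluent = true → f ∈ Fn) ∧ ArgList.Over Fn C args
  def ArgList.Over (Fn : Set FuncSym) (C : Set ℕ) : ArgList → Prop
    | .nil => True
    | .cons t ts => Term.Over Fn C t ∧ ArgList.Over Fn C ts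
end

mutual
  /-- Situation formulas over `(F, C)`: mentioning only (relational) fluents
  from `R`, functional fluents from `Fn` and clocks from `C` (the distinguished
  predicates `poss`, `gc` are determined by a BAT and are allowed as well). -/
  def OverS (R : Set PredSym) (Fn : Set FuncSym) (C : Set ℕ) : SitForm → Prop
    | .pred P args =>
        (P.isFluent = true → P = PredSym.poss ∨ P = PredSym.gc ∨ P ∈ R) ∧
        ArgList.Over Fn C args
    | .eq t₁ t₂ => Term.Over Fn C t₁ ∧ Term.Over Fn C t₂
    | .clockCmp c _ _ => Term.Over Fn C c
    | .constCmp _ _ _ => True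
    | .and α β => OverS R Fn C α ∧ OverS R Fn C β
    | .not α => OverS R Fn C α
    | .all s body => ∀ k : ℕ,
        OverS R Fn (C ∪ (if s = Sort3.clk then {k} else ∅)) (body (Name.mk s k))
    | .box α => OverS R Fn C α
    | .after δ α => OverP R Fn C δ ∧ OverS R Fn C α
    | .during δ φ => OverP R Fn C δ ∧ OverT R Fn C φ
    | .duringFin δ φ => OverP R Fn C δ ∧ OverT R Fn C φ
  def OverT (R : Set PredSym) (Fn : Set FuncSym) (C : Set ℕ) : TraceForm → Prop
    | .base α => OverS R Fn C α
    | .and φ ψ => OverT R Fn C φ ∧ OverT R Fn C ψ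
    | .not φ => OverT R Fn C φ
    | .all s body => ∀ k : ℕ,
        OverT R Fn (C ∪ (if s = Sort3.clk then {k} else ∅)) (body (Name.mk s k))
    | .untl _ φ ψ => OverT R Fn C φ ∧ OverT R Fn C ψ
  def OverP (R : Set PredSym) (Fn : Set FuncSym) (C : Set ℕ) : Prog → Prop
    | .act t => Term.Over Fn C t
    | .test α => OverS R Fn C α
    | .seq δ₁ δ₂ => OverP R Fn C δ₁ ∧ OverP R Fn C δ₂
    | .choice δ₁ δ₂ => OverP R Fn C δ₁ ∧ OverP R Fn C δ₂
    | .conc δ₁ δ₂ => OverP R Fn C δ₁ ∧ OverP R Fn C δ₂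
    | .star δ => OverP R Fn C δ
end

/-! ### The ESG fragment: no clocks, no `reset`/`gc`, only unbounded until -/

mutual
  def IsESGS : SitForm → Prop
    | .pred P args => P ≠ PredSym.reset ∧ P ≠ PredSym.gc ∧ ArgList.noClk args
    | .eq t₁ t₂ => Term.noClk t₁ ∧ Term.noClk t₂
    | .clockCmp _ _ _ => False
    | .constCmp _ _ _ => False
    | .and α β => IsESGS α ∧ IsESGS β
    | .not α => IsESGS α
    | .all s body => s ≠ Sort3.clk ∧ ∀ n : Name, IsESGS (body n)
    | .box α => IsESGS α
    | .after δ α => IsESGP δ ∧ IsESGS α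
    | .during δ φ => IsESGP δ ∧ IsESGT φ
    | .duringFin δ φ => IsESGP δ ∧ IsESGT φ
  def IsESGT : TraceForm → Prop
    | .base α => IsESGS α
    | .and φ ψ => IsESGT φ ∧ IsESGT ψ
    | .not φ => IsESGT φ
    | .all s body => s ≠ Sort3.clk ∧ ∀ n : Name, IsESGT (body n)
    | .untl I φ ψ => I = Ival.unbounded ∧ IsESGT φ ∧ IsESGT ψ
  def IsESGP : Prog → Prop
    | .act t => Term.noClk t
    | .test α => α.IsStatic ∧ IsESGS α
    | .seq δ₁ δ₂ => IsESGP δ₁ ∧ IsESGP δ₂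
    | .choice δ₁ δ₂ => IsESGP δ₁ ∧ IsESGP δ₂
    | .conc δ₁ δ₂ => IsESGP δ₁ ∧ IsESGP δ₂
    | .star δ => IsESGP δ
end
/-! ### The logic ESG: untimed traces and worlds -/

abbrev ETrace := List ℕ

structure EWorld : Type where
  fval : FuncSym → List Name → ETrace → Name
  pval : PredSym → List Name → ETrace → Bool
  fval_sort : ∀ f args z, (fval f args z).sort = f.sort
  rigid_fun : ∀ f : FuncSym, f.fluent = false → ∀ args z z', fval f args z = fval f args z'
  rigid_pred : ∀ P : PredSym, P.isFluent = false → ∀ args z z', pval P args z = pval P args z'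
  unique_names : ∀ f f' args args' z z', f.sort = Sort3.act → f'.sort = Sort3.act →
      (f, args) ≠ (f', args') → fval f args z ≠ fval f' args' z'

mutual
  def edenot (e : EWorld) (z : ETrace) : Term → Name
    | .name n => n
    | .app f args => e.fval f (edenotArgs e z args) z
  def edenotArgs (e : EWorld) (z : ETrace) : ArgList → List Name
    | .nil => []
    | .cons t ts => edenot e z t :: edenotArgs e z ts
end

def EStaticSat (e : EWorld) (z : ETrace) : SitForm → Prop
  | .pred P args => e.pval P (edenotArgs e z args) z = true
  | .eq t₁ t₂ => edenot e z t₁ = edenot e z t₂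
  | .clockCmp _ _ _ => False
  | .constCmp _ _ _ => False
  | .and α β => EStaticSat e z α ∧ EStaticSat e z β
  | .not α => ¬ EStaticSat e z α
  | .all s body => ∀ k : ℕ, EStaticSat e z (body (Name.mk s k))
  | .box _ => False
  | .after _ _ => False
  | .during _ _ => False
  | .duringFin _ _ => False

inductive EFinal (e : EWorld) (z : ETrace) : Prog → Prop
  | test {α} : EStaticSat e z α → EFinal e z (.test α)
  | seq {δ₁ δ₂} : EFinal e z δ₁ → EFinal e z δ₂ → EFinal e z (.seq δ₁ δ₂)
  | choiceL {δ₁ δ₂} : EFinal e z δ₁ → EFinal e z (.choice δ₁ δ₂)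
  | choiceR {δ₁ δ₂} : EFinal e z δ₂ → EFinal e z (.choice δ₁ δ₂)
  | star {δ} : EFinal e z (.star δ)
  | conc {δ₁ δ₂} : EFinal e z δ₁ → EFinal e z δ₂ → EFinal e z (.conc δ₁ δ₂)

inductive ETransA (e : EWorld) (z : ETrace) : Prog → ETrace → Prog → Prop
  | act {a : Term} (h : (edenot e z a).sort = Sort3.act) :
      ETransA e z (.act a) (z ++ [(edenot e z a).id]) nilProg
  | seqL {δ₁ δ₂ γ z'} : ETransA e z δ₁ z' γ → ETransA e z (.seq δ₁ δ₂) z' (.seq γ δ₂)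
  | seqR {δ₁ δ₂ δ' z'} : EFinal e z δ₁ → ETransA e z δ₂ z' δ' → ETransA e z (.seq δ₁ δ₂) z' δ'
  | choiceL {δ₁ δ₂ δ' z'} : ETransA e z δ₁ z' δ' → ETransA e z (.choice δ₁ δ₂) z' δ'
  | choiceR {δ₁ δ₂ δ' z'} : ETransA e z δ₂ z' δ' → ETransA e z (.choice δ₁ δ₂) z' δ'
  | star {δ γ z'} : ETransA e z δ z' γ → ETransA e z (.star δ) z' (.seq γ (.star δ))
  | concL {δ₁ δ₂ δ' z'} : ETransA e z δ₁ z' δ' → ETransA e z (.conc δ₁ δ₂) z' (.conc δ' δ₂)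
  | concR {δ₁ δ₂ δ' z'} : ETransA e z δ₂ z' δ' → ETransA e z (.conc δ₁ δ₂) z' (.conc δ₁ δ')

abbrev EConfig := ETrace × Prog

def ETrans (e : EWorld) (c c' : EConfig) : Prop := ETransA e c.1 c.2 c'.1 c'.2

def EFinalC (e : EWorld) (c : EConfig) : Prop := EFinal e c.1 c.2

def ETransStar (e : EWorld) : EConfig → EConfig → Prop :=
  Relation.ReflTransGen (ETrans e)

inductive ETTrace : Type
  | fin (z : ETrace)
  | inf (π : ℕ → ℕ)

def eprefixTr (π : ℕ → ℕ) (n : ℕ) : ETrace := (List.range n).map π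

def ETTrace.len : ETTrace → ℕ∞
  | .fin z => (z.length : ℕ∞)
  | .inf _ => ⊤

def ETTrace.takeFin : ETTrace → ℕ → ETrace
  | .fin z, n => z.take n
  | .inf π, n => eprefixTr π n

def ETTrace.drop : ETTrace → ℕ → ETTrace
  | .fin z, n => .fin (z.drop n)
  | .inf π, n => .inf (fun i => π (i + n))

def EProgTrace (e : EWorld) (z : ETrace) (δ : Prog) : ETTrace → Prop
  | .fin z' => ∃ δ', ETransStar e (z, δ) (z ++ z', δ') ∧ EFinalC e (z ++ z', δ')
  | .inf π => ∃ ρ : ℕ → Prog, ρ 0 = δ ∧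
      (∀ i, ETrans e (z ++ eprefixTr π i, ρ i) (z ++ eprefixTr π (i + 1), ρ (i + 1))) ∧
      (∀ i, ¬ EFinalC e (z ++ eprefixTr π (i + 1), ρ (i + 1)))

mutual
  def ESatS : EWorld → ETrace → SitForm → Prop
    | e, z, .pred P args => e.pval P (edenotArgs e z args) z = true
    | e, z, .eq t₁ t₂ => edenot e z t₁ = edenot e z t₂
    | _, _, .clockCmp _ _ _ => False
    | _, _, .constCmp _ _ _ => False
    | e, z, .and α β => ESatS e z α ∧ ESatS e z β
    | e, z, .not α => ¬ ESatS e z α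
    | e, z, .all s body => ∀ k : ℕ, ESatS e z (body (Name.mk s k))
    | e, z, .box α => ∀ z' : ETrace, ESatS e (z ++ z') α
    | e, z, .after δ α => ∀ z' : ETrace, EProgTrace e z δ (.fin z') → ESatS e (z ++ z') α
    | e, z, .during δ φ => ∀ τ : ETTrace, EProgTrace e z δ τ → ESatT e z τ φ
    | e, z, .duringFin δ φ =>
        ∀ z' : ETrace, EProgTrace e z δ (.fin z') → ESatT e z (.fin z') φ
  def ESatT : EWorld → ETrace → ETTrace → TraceForm → Prop
    | e, z, _, .base α => ESatS e z α
    | e, z, τ, .and φ ψ => ESatT e z τ φ ∧ ESatT e z τ ψ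
    | e, z, τ, .not φ => ¬ ESatT e z τ φ
    | e, z, τ, .all s body => ∀ k : ℕ, ESatT e z τ (body (Name.mk s k))
    | e, z, τ, .untl _ φ ψ =>
        ∃ k : ℕ, 1 ≤ k ∧ (k : ℕ∞) ≤ τ.len ∧
          ESatT e (z ++ τ.takeFin k) (τ.drop k) ψ ∧
          ∀ m : ℕ, 1 ≤ m → m < k → ESatT e (z ++ τ.takeFin m) (τ.drop m) φ
end

/-- `w ⊨_ESG α` -/
def ESat0 (e : EWorld) (α : SitForm) : Prop := ESatS e [] α

/-- Validity in ESG. -/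
def ESGValid (α : SitForm) : Prop := ∀ e : EWorld, ESat0 e α

def ESatAll (e : EWorld) (Γ : Set SitForm) : Prop := ∀ α ∈ Γ, ESat0 e α

/-- Entailment in ESG. -/
def EEntails (Γ : Set SitForm) (α : SitForm) : Prop :=
  ∀ e : EWorld, ESatAll e Γ → ESat0 e α

/-- The time-extended t-ESG world corresponding to an ESG world: it agrees
with the ESG world on every primitive term and primitive formula after every
timed trace, via the corresponding symbolic (untimed) trace. -/
def IsTimeExt (e : EWorld) (w : World) : Prop :=
  (∀ f args z, w.fval f args z = e.fval f args (untimed z)) ∧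
  (∀ P args z, w.pval P args z = e.pval P args (untimed z))
/-! ### Basic action theories -/

/-- Universal quantification over a list of sorts (for the tuples `x⃗` in
successor state axioms). -/
def allNamesL : List Sort3 → (List Name → SitForm) → SitForm
  | [], body => body []
  | s :: ss, body => .all s fun x => allNamesL ss fun xs => body (x :: xs)

def unaryArgs (t : Term) : ArgList := .cons t .nil

/-- A basic action theory over a finite set of fluents (`Frel` relational,
`Ffun` functional) and a finite set of clocks `C`:
* `init` is the set `Σ₀` of sentences about the initial situation,
* `pre a` is the right-hand side `π_a` of the precondition axiom
  `□ Poss(a) ≡ π_a`,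
* `gcA a` is the right-hand side `g_a` of the clock-constraint axiom
  `□ g(a) ≡ g_a`,
* `ssaP P a x⃗` is the right-hand side `γ_F(x⃗)` of the successor state axiom
  `□ [a] F(x⃗) ≡ γ_F(x⃗)` of the relational fluent `P`,
* `ssaF f a x⃗ y` is the right-hand side `γ_f(x⃗, y)` of the successor state
  axiom `□ [a] f(x⃗) = y ≡ γ_f(x⃗, y)` of the functional fluent `f`. -/
structure BAT : Type where
  Frel : Finset PredSym
  Ffun : Finset FuncSym
  C : Finset ℕ
  argSorts : PredSym → List Sort3
  argSortsF : FuncSym → List Sort3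
  init : Set SitForm
  pre : Term → SitForm
  gcA : Term → SitForm
  ssaP : PredSym → Term → ArgList → SitForm
  ssaF : FuncSym → Term → ArgList → Term → SitForm

/-- The precondition axiom `□ ∀a. Poss(a) ≡ π_a`. -/
def BAT.preAx (B : BAT) : SitForm :=
  .box (.all .act fun a =>
    SitForm.iffS (.pred .poss (unaryArgs (.name a))) (B.pre (.name a)))

/-- The clock-constraint axiom `□ ∀a. g(a) ≡ g_a`. -/
def BAT.gcAx (B : BAT) : SitForm :=
  .box (.all .act fun a =>
    SitForm.iffS (.pred .gc (unaryArgs (.name a))) (B.gcA (.name a)))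

/-- The successor state axiom `□ ∀a ∀x⃗. [a] F(x⃗) ≡ γ_F(x⃗)`. -/
def BAT.ssaAxP (B : BAT) (P : PredSym) : SitForm :=
  .box (.all .act fun a => allNamesL (B.argSorts P) fun xs =>
    SitForm.iffS (.after (.act (.name a)) (.pred P (ArgList.ofNames xs)))
      (B.ssaP P (.name a) (ArgList.ofNames xs)))

/-- The successor state axiom `□ ∀a ∀x⃗ ∀y. [a] (f(x⃗) = y) ≡ γ_f(x⃗, y)`. -/
def BAT.ssaAxF (B : BAT) (f : FuncSym) : SitForm :=
  .box (.all .act fun a => allNamesL (B.argSortsF f) fun xs =>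
    .all f.sort fun y =>
      SitForm.iffS
        (.after (.act (.name a)) (.eq (.app f (ArgList.ofNames xs)) (.name y)))
        (B.ssaF f (.name a) (ArgList.ofNames xs) (.name y)))

/-- The sentences of the basic action theory:
`Σ = Σ₀ ∪ Σ_pre ∪ Σ_g ∪ Σ_post`. -/
def BAT.axioms (B : BAT) : Set SitForm :=
  B.init ∪ {B.preAx, B.gcAx} ∪
    (B.ssaAxP '' (↑B.Frel : Set PredSym)) ∪ (B.ssaAxF '' (↑B.Ffun : Set FuncSym))

/-- Well-formedness of a basic action theory: the fluents are fluent symbols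
(`Frel` contains the distinguished fluent `reset` but not `poss` or `gc`),
`Σ₀` consists of fluent sentences, `π_a` and all right-hand sides of successor
state axioms are fluent formulas, and `g_a` (as well as `γ_reset`, which
necessarily mentions clock terms) is a static formula not mentioning `poss`. -/
def BAT.WF (B : BAT) : Prop :=
  PredSym.reset ∈ B.Frel ∧ PredSym.poss ∉ B.Frel ∧ PredSym.gc ∉ B.Frel ∧
  (∀ P ∈ B.Frel, P.isFluent = true) ∧ (∀ f ∈ B.Ffun, f.fluent = true) ∧
  (∀ α ∈ B.init, α.IsFluentF) ∧
  (∀ t, (B.pre t).IsFluentF) ∧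
  (∀ t, (B.gcA t).IsStaticNoPoss) ∧
  (∀ P ∈ B.Frel, P ≠ PredSym.reset → ∀ a xs, (B.ssaP P a xs).IsFluentF) ∧
  (∀ a xs, (B.ssaP PredSym.reset a xs).IsStaticNoPoss) ∧
  (∀ f ∈ B.Ffun, ∀ a xs y, (B.ssaF f a xs y).IsFluentF)

/-- `w_Σ`: the world that is like `w` except that it satisfies the dynamics
prescribed by the basic action theory `B`:
* it agrees with `w` on all symbols outside the fluents of `B` (after every
  trace), and on all fluents of `B` initially;
* after an action, the values of the fluents of `B` are determined by their
  successor state axioms;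
* the truth of `Poss` and of the clock-constraint predicate `g` is determined
  by the precondition and clock-constraint axioms. -/
def IsWSigma (B : BAT) (w wS : World) : Prop :=
  (∀ f : FuncSym, f ∉ B.Ffun → ∀ args z, wS.fval f args z = w.fval f args z) ∧
  (∀ P : PredSym, P ∉ B.Frel → P ≠ PredSym.poss → P ≠ PredSym.gc →
      ∀ args z, wS.pval P args z = w.pval P args z) ∧
  (∀ f ∈ B.Ffun, ∀ args : List Name, wS.fval f args [] = w.fval f args []) ∧
  (∀ f ∈ B.Ffun, ∀ (args : List Name) (z : FinTrace) (t : ℝ) (p : ℕ) (n : Name),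
      (wS.fval f args (z ++ [(t, p)]) = n ↔
        SatS wS z (B.ssaF f (.name (Name.mk .act p)) (ArgList.ofNames args) (.name n)))) ∧
  (∀ P ∈ B.Frel, ∀ args : List Name, wS.pval P args [] = w.pval P args []) ∧
  (∀ P ∈ B.Frel, ∀ (args : List Name) (z : FinTrace) (t : ℝ) (p : ℕ),
      (wS.pval P args (z ++ [(t, p)]) = true ↔
        SatS wS z (B.ssaP P (.name (Name.mk .act p)) (ArgList.ofNames args)))) ∧
  (∀ (n : Name) (z : FinTrace),
      (wS.pval .poss [n] z = true ↔ SatS wS z (B.pre (.name n)))) ∧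
  (∀ (args : List Name) (z : FinTrace), args.length ≠ 1 →
      wS.pval .poss args z = w.pval .poss args z) ∧
  (∀ (n : Name) (z : FinTrace),
      (wS.pval .gc [n] z = true ↔ SatS wS z (B.gcA (.name n)))) ∧
  (∀ (args : List Name) (z : FinTrace), args.length ≠ 1 →
      wS.pval .gc args z = w.pval .gc args z)

/-! ### Complete information -/

/-- A basic action theory with complete information: the initial theory
decides every primitive formula over `(F, C)` and determines the value of
every functional fluent of `F`. -/
def CompleteInfo (B : BAT) : Prop :=
  (∀ (P : PredSym) (args : List Name),
      (P.isFluent = true → P ∈ B.Frel) →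
      (∀ n ∈ args, n.sort = Sort3.clk → n.id ∈ B.C) →
      Entails B.init (.pred P (ArgList.ofNames args)) ∨
        Entails B.init (.not (.pred P (ArgList.ofNames args)))) ∧
  (∀ f ∈ B.Ffun, ∀ args : List Name, ∃ n : Name,
      Entails B.init (.eq (.app f (ArgList.ofNames args)) (.name n)))
/-! ### Regression -/

/-- Rational timed traces (all time points rational). -/
abbrev RatTrace := List (ℚ × ℕ)

def ratToFin (z : RatTrace) : FinTrace := z.map fun q => ((q.1 : ℝ), q.2)

def lastTimeQ (z : RatTrace) : ℚ := ((z.getLast?).map Prod.fst).getD 0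

/-- Unfold the distinguished predicates `Poss` and `g` once, replacing them by
the right-hand sides of the precondition and clock-constraint axioms. -/
def unfoldPG (B : BAT) : SitForm → SitForm
  | .pred .poss (.cons t .nil) => B.pre t
  | .pred .gc (.cons t .nil) => B.gcA t
  | .pred P args => .pred P args
  | .eq t₁ t₂ => .eq t₁ t₂
  | .clockCmp c op r => .clockCmp c op r
  | .constCmp r op r' => .constCmp r op r'
  | .and α β => .and (unfoldPG B α) (unfoldPG B β)
  | .not α => .not (unfoldPG B α)
  | .all s body => .all s fun n => unfoldPG B (body n)
  | α => α

/-- One regression step through a time increment `d`: clock comparisons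
`c ⋈ r` become `c ⋈ (r - d)`. -/
def RstepT (d : ℚ) : SitForm → SitForm
  | .clockCmp c op r => .clockCmp c op (r - d)
  | .and α β => .and (RstepT d α) (RstepT d β)
  | .not α => .not (RstepT d α)
  | .all s body => .all s fun n => RstepT d (body n)
  | α => α

/-- One regression step through an action `p`: a fluent atom is replaced by
the (instantiated) right-hand side of its successor state axiom, and a clock
comparison `c ⋈ r` becomes
`(R[Reset(c)] ∧ 0 ⋈ r) ∨ (¬ R[Reset(c)] ∧ c ⋈ r)`. -/
def RstepA (B : BAT) (p : ℕ) : SitForm → SitForm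
  | .pred (.fl i) args => B.ssaP (.fl i) (.name (Name.mk .act p)) args
  | .pred .reset args => B.ssaP .reset (.name (Name.mk .act p)) args
  | .pred P args => .pred P args
  | .eq t₁ t₂ => .eq t₁ t₂
  | .clockCmp c op r =>
      SitForm.orS
        (.and (B.ssaP .reset (.name (Name.mk .act p)) (.cons c .nil)) (.constCmp 0 op r))
        (.and (.not (B.ssaP .reset (.name (Name.mk .act p)) (.cons c .nil)))
          (.clockCmp c op r))
  | .constCmp r op r' => .constCmp r op r'
  | .and α β => .and (RstepA B p α) (RstepA B p β)
  | .not α => .not (RstepA B p α)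
  | .all s body => .all s fun n => RstepA B p (body n)
  | α => α

/-- Regression over the empty trace: clock comparisons `c ⋈ r` become
`0 ⋈ r` (all clocks are initialized to `0`); everything else is unchanged. -/
def Rinit : SitForm → SitForm
  | .clockCmp _ op r => .constCmp 0 op r
  | .and α β => .and (Rinit α) (Rinit β)
  | .not α => .not (Rinit α)
  | .all s body => .all s fun n => Rinit (body n)
  | α => α

/-- Regression through a (reversed) rational trace: each pair `(t, p)` is
regressed by first regressing through the action `p` and then through the
time increment `t - time(z)`. -/
def RcoreRev (B : BAT) : RatTrace → SitForm → SitForm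
  | [], α => Rinit α
  | (t, p) :: zr, α =>
      RcoreRev B zr (RstepT (t - ((zr.head?.map Prod.fst).getD 0)) (RstepA B p α))

/-- The regression operator `R[z, α]` for a static formula `α` and a rational
trace `z`. -/
def Regress (B : BAT) (z : RatTrace) (α : SitForm) : SitForm :=
  RcoreRev B z.reverse (unfoldPG B α)
/-! ### Finite-domain basic action theories -/

def bigOr : List SitForm → SitForm := fun l => l.foldr SitForm.orS falseSit

/-- A finite-domain BAT: a BAT together with finite domains of object, action
and clock standard names, and rigid type predicates `τ_o`, `τ_a`, `τ_c`. -/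
structure FDBAT extends BAT where
  Dobj : Finset ℕ
  Dact : Finset ℕ
  Dclk : Finset ℕ
  tauO : ℕ
  tauA : ℕ
  tauC : ℕ

def FDBAT.dom (B : FDBAT) : Sort3 → Finset ℕ
  | .obj => B.Dobj
  | .act => B.Dact
  | .clk => B.Dclk

def FDBAT.tau (B : FDBAT) : Sort3 → ℕ
  | .obj => B.tauO
  | .act => B.tauA
  | .clk => B.tauC

def tauAtom (tau : Sort3 → ℕ) (s : Sort3) (n : Name) : SitForm :=
  .pred (.rg (tau s)) (.cons (.name n) .nil)

/-- The domain closure axiom `∀x. τ(x) ≡ (x = n₁ ∨ … ∨ x = n_k)`. -/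
noncomputable def FDBAT.closureAx (B : FDBAT) (s : Sort3) : SitForm :=
  .all s fun x =>
    SitForm.iffS (tauAtom B.tau s x)
      (bigOr ((B.dom s).toList.map fun k => .eq (.name x) (.name (Name.mk s k))))

/-! Relativized formulas: every universal quantifier occurs in the form
`∀x. τ(x) ⊃ φ(x)`. -/

mutual
  inductive RelS (tau : Sort3 → ℕ) : SitForm → Prop
    | pred {P args} : RelS tau (.pred P args)
    | eq {t₁ t₂} : RelS tau (.eq t₁ t₂)
    | clockCmp {c op r} : RelS tau (.clockCmp c op r)
    | constCmp {r op r'} : RelS tau (.constCmp r op r')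
    | and {α β} : RelS tau α → RelS tau β → RelS tau (.and α β)
    | not {α} : RelS tau α → RelS tau (.not α)
    | all {s body} (ψ : Name → SitForm) :
        (∀ n, body n = SitForm.impS (tauAtom tau s n) (ψ n)) →
        (∀ n, RelS tau (ψ n)) → RelS tau (.all s body)
    | box {α} : RelS tau α → RelS tau (.box α)
    | after {δ α} : RelP tau δ → RelS tau α → RelS tau (.after δ α)
    | during {δ φ} : RelP tau δ → RelT tau φ → RelS tau (.during δ φ)
    | duringFin {δ φ} : RelP tau δ → RelT tau φ → RelS tau (.duringFin δ φ)
  inductive RelT (tau : Sort3 → ℕ) : TraceForm → Prop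
    | base {α} : RelS tau α → RelT tau (.base α)
    | and {φ ψ} : RelT tau φ → RelT tau ψ → RelT tau (.and φ ψ)
    | not {φ} : RelT tau φ → RelT tau (.not φ)
    | all {s body} (ψ : Name → TraceForm) :
        (∀ n, body n = TraceForm.not (.and (.base (tauAtom tau s n)) (.not (ψ n)))) →
        (∀ n, RelT tau (ψ n)) → RelT tau (.all s body)
    | untl {I φ ψ} : RelT tau φ → RelT tau ψ → RelT tau (.untl I φ ψ)
  inductive RelP (tau : Sort3 → ℕ) : Prog → Prop
    | act {t} : RelP tau (.act t)
    | test {α} : RelS tau α → RelP tau (.test α)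
    | seq {δ₁ δ₂} : RelP tau δ₁ → RelP tau δ₂ → RelP tau (.seq δ₁ δ₂)
    | choice {δ₁ δ₂} : RelP tau δ₁ → RelP tau δ₂ → RelP tau (.choice δ₁ δ₂)
    | conc {δ₁ δ₂} : RelP tau δ₁ → RelP tau δ₂ → RelP tau (.conc δ₁ δ₂)
    | star {δ} : RelP tau δ → RelP tau (.star δ)
end

/-- Well-formedness of a finite-domain BAT: `Σ₀` contains the three domain
closure axioms and, apart from these, every universal quantifier in `Σ` is
relativized to one of the type predicates. -/
def FDBAT.FDWF (B : FDBAT) : Prop :=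
  (∀ s : Sort3, B.closureAx s ∈ B.init) ∧
  (∀ α ∈ B.init, (∀ s : Sort3, α ≠ B.closureAx s) → RelS B.tau α) ∧
  (∀ t, RelS B.tau (B.pre t)) ∧
  (∀ t, RelS B.tau (B.gcA t)) ∧
  (∀ P a xs, RelS B.tau (B.ssaP P a xs)) ∧
  (∀ f a xs y, RelS B.tau (B.ssaF f a xs y))

/-- `w ≡_F w'`: the two worlds agree on the initial values of all fluents of
the finite-domain BAT on all arguments from the domain. -/
def EquivF (B : FDBAT) (w w' : World) : Prop :=
  (∀ P ∈ B.Frel, ∀ args : List Name,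
      (∀ n ∈ args, n.id ∈ B.dom n.sort) → w.pval P args [] = w'.pval P args []) ∧
  (∀ f ∈ B.Ffun, ∀ args : List Name,
      (∀ n ∈ args, n.id ∈ B.dom n.sort) → w.fval f args [] = w'.fval f args [])

/-! ### Metric temporal logic (MTL), pointwise semantics over timed words -/

/-- MTL formulas; atomic propositions are identified with nullary fluents. -/
inductive MTL : Type
  | atom (p : ℕ)
  | mnot (φ : MTL)
  | mand (φ ψ : MTL)
  | muntil (I : Ival) (φ ψ : MTL)

/-- The t-ESG trace formula corresponding to an MTL formula. -/
def MTL.toTrace : MTL → TraceForm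
  | .atom p => .base (.pred (.fl p) .nil)
  | .mnot φ => .not φ.toTrace
  | .mand φ ψ => .and φ.toTrace ψ.toTrace
  | .muntil I φ ψ => .untl I φ.toTrace ψ.toTrace

/-- A (finite or infinite) timed word: position `i` carries a set of atomic
propositions and a time point (`none` marks positions past the end of a
finite word). -/
abbrev TWord := ℕ → Option (Set ℕ × ℝ)

structure TWordWF (ρ : TWord) : Prop where
  init : ∃ s, ρ 0 = some (s, 0)
  closed : ∀ i, ρ (i + 1) ≠ none → ρ i ≠ none
  mono : ∀ i s t s' t', ρ i = some (s, t) → ρ (i + 1) = some (s', t') → t ≤ t'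

/-- Pointwise MTL semantics: `ρ, i ⊨ φ`. -/
def MTLSat (ρ : TWord) : ℕ → MTL → Prop
  | i, .atom p => ∃ s t, ρ i = some (s, t) ∧ p ∈ s
  | i, .mnot φ => ¬ MTLSat ρ i φ
  | i, .mand φ ψ => MTLSat ρ i φ ∧ MTLSat ρ i ψ
  | i, .muntil I φ ψ =>
      ∃ (j : ℕ) (si : Set ℕ) (ti : ℝ) (sj : Set ℕ) (tj : ℝ),
        i < j ∧ ρ i = some (si, ti) ∧ ρ j = some (sj, tj) ∧
        MTLSat ρ j ψ ∧ I.memR (tj - ti) ∧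
        ∀ m, i < m → m < j → MTLSat ρ m φ

/-- Validity in MTL (pointwise semantics over timed words). -/
def MTLValid (φ : MTL) : Prop := ∀ ρ : TWord, TWordWF ρ → MTLSat ρ 0 φ

/-- The timed word corresponding to a pair `(w, τ)` of a t-ESG world and a
timed trace: position `i` carries the set of (nullary) primitive formulas true
in `w` after the prefix of `τ` of length `i`, together with its time point. -/
def wordOf (w : World) (τ : TTrace) : TWord := fun i =>
  match τ with
  | .fin z =>
      if i ≤ z.length then
        some ({p : ℕ | w.pval (.fl p) [] (z.take i) = true}, lastTime (z.take i))
      else none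
  | .inf π =>
      some ({p : ℕ | w.pval (.fl p) [] (prefixTr π i) = true}, lastTime (prefixTr π i))

/-!
A world `w` and a trace `τ` carry the timed word whose `i`-th letter is the set of nullary fluents
true after the first `i` actions, stamped with the time of the `i`-th action (time `0` for `i = 0`).
Truth of an MTL formula after the `i`-th prefix of `τ` is truth at position `i` of that word, so
MTL validity implies t-ESG validity. For the converse every timed word has to come from a world and
a trace. Action names play no role in this, so one fixed action can be repeated at the times of the
word, and a world is free to let its nullary fluents depend on the number of past actions only.
-/

variable {w : World} {z : FinTrace} {τ : TTrace} {ρ : TWord} {S : ℕ → Set ℕ} {t : ℕ → ℝ}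
  {N : ℕ∞} {i k : ℕ}

/-! ### Timed traces and their prefixes -/

@[simp] theorem lastTime_nil : lastTime [] = 0 := rfl

@[simp] theorem lastTime_append_singleton (z : FinTrace) (x : ℝ × ℕ) :
    lastTime (z ++ [x]) = x.1 := by
  simp [lastTime]

theorem lastTime_take_succ (hi : i < z.length) : lastTime (z.take (i + 1)) = z[i].1 := by
  rw [List.take_succ_eq_append_getElem hi, lastTime_append_singleton]

theorem getElem_zero_cons_map_fst (z : FinTrace) (hi : i < (0 :: z.map Prod.fst).length) :
    (0 :: z.map Prod.fst)[i] = lastTime (z.take i) := by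
  cases i with
  | zero => simp
  | succ i =>
    have hi' : i < z.length := by simpa using hi
    simp [lastTime_take_succ hi']

theorem traceWF_iff_lastTime_take :
    TraceWF z ↔ ∀ i < z.length, lastTime (z.take i) ≤ lastTime (z.take (i + 1)) := by
  refine List.isChain_iff_getElem.trans ?_
  simp only [getElem_zero_cons_map_fst, List.length_cons, List.length_map,
    Nat.add_lt_add_iff_right]

@[simp] theorem prefixTr_zero (π : ℕ → ℝ × ℕ) : prefixTr π 0 = [] := rfl

theorem prefixTr_succ (π : ℕ → ℝ × ℕ) (n : ℕ) : prefixTr π (n + 1) = prefixTr π n ++ [π n] := by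
  simp [prefixTr, List.range_succ]

theorem prefixTr_append_prefixTr_add (π : ℕ → ℝ × ℕ) (n k : ℕ) :
    prefixTr π n ++ prefixTr (fun i => π (i + n)) k = prefixTr π (n + k) := by
  simp [prefixTr, List.range_add, Function.comp_def, Nat.add_comm]

@[simp] theorem length_prefixTr (π : ℕ → ℝ × ℕ) (n : ℕ) : (prefixTr π n).length = n := by
  simp [prefixTr]

theorem take_prefixTr (π : ℕ → ℝ × ℕ) {n : ℕ} (hi : i ≤ n) :
    (prefixTr π n).take i = prefixTr π i := by
  rw [prefixTr, ← List.map_take, List.take_range, Nat.min_eq_left hi, prefixTr]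

namespace TTrace

@[simp] theorem takeFin_zero (τ : TTrace) : τ.takeFin 0 = [] := by
  cases τ <;> rfl

@[simp] theorem drop_zero (τ : TTrace) : τ.drop 0 = τ := by
  cases τ <;> rfl

theorem length_takeFin (hi : i ≤ τ.len) : (τ.takeFin i).length = i := by
  cases τ <;> simp_all [takeFin, len]

theorem takeFin_append_takeFin_drop (τ : TTrace) (i k : ℕ) :
    τ.takeFin i ++ (τ.drop i).takeFin k = τ.takeFin (i + k) := by
  cases τ with
  | fin z => simp [takeFin, drop, List.take_add]
  | inf π => exact prefixTr_append_prefixTr_add π i k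

theorem drop_drop (τ : TTrace) (i k : ℕ) : (τ.drop i).drop k = τ.drop (i + k) := by
  cases τ <;> simp [drop, Nat.add_assoc, Nat.add_comm k i]

theorem natCast_le_len_drop (hk : 1 ≤ k) : k ≤ (τ.drop i).len ↔ (i + k : ℕ) ≤ τ.len := by
  cases τ with
  | fin z =>
    simp only [len, drop, List.length_drop, Nat.cast_le]
    omega
  | inf π => simp [len, drop]

theorem wf_iff_lastTime_takeFin :
    τ.WF ↔ ∀ i : ℕ, (i + 1 : ℕ) ≤ τ.len →
      lastTime (τ.takeFin i) ≤ lastTime (τ.takeFin (i + 1)) := by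
  cases τ with
  | fin z => simp only [WF, len, takeFin, Nat.cast_le, Nat.succ_le_iff, traceWF_iff_lastTime_take]
  | inf π =>
    have last_succ (i : ℕ) : lastTime (prefixTr π (i + 1)) = (π i).1 := by
      rw [prefixTr_succ, lastTime_append_singleton]
    simp only [WF, len, takeFin, le_top, forall_const]
    constructor
    · rintro ⟨nonneg, mono⟩ (_ | i)
      · simpa [last_succ] using nonneg 0
      · simpa only [last_succ] using mono i (i + 1) i.le_succ
    · intro step
      have mono := monotone_nat_of_le_succ step
      refine ⟨fun i => ?_, fun i j hij => ?_⟩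
      · simpa [last_succ] using mono (Nat.zero_le (i + 1))
      · simpa only [last_succ] using mono (Nat.succ_le_succ hij)

end TTrace

/-! ### The timed word of a world and a trace -/

/-- The nullary fluents true in `w` after `z`: the letter that `wordOf` reads off at a prefix. -/
def World.nullaryFluents (w : World) (z : FinTrace) : Set ℕ := {p | w.pval (.fl p) [] z = true}

theorem wordOf_eq_some_iff {x : Set ℕ × ℝ} :
    wordOf w τ i = some x ↔
      i ≤ τ.len ∧ (w.nullaryFluents (τ.takeFin i), lastTime (τ.takeFin i)) = x := by
  cases τ <;> simp [wordOf, TTrace.len, TTrace.takeFin, World.nullaryFluents]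

theorem TTrace.WF.tWordWF_wordOf (hτ : τ.WF) (w : World) : TWordWF (wordOf w τ) where
  init := ⟨w.nullaryFluents [], by simp [wordOf_eq_some_iff]⟩
  closed i := by
    simp only [Option.ne_none_iff_exists', wordOf_eq_some_iff, exists_and_left, exists_eq',
      and_true]
    exact (Nat.cast_le.2 i.le_succ).trans
  mono i s t s' t' := by
    simp only [wordOf_eq_some_iff, Prod.mk.injEq]
    rintro ⟨-, -, rfl⟩ ⟨hi, -, rfl⟩
    exact wf_iff_lastTime_takeFin.1 hτ i hi

/-! ### Truth along a trace is truth along its word -/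

/-- Truth of a trace formula at position `i` of `τ`: `w, z, σ ⊨ φ`, where `z` consists of the
first `i` actions of `τ` and `σ` is the rest. -/
def SatAt (w : World) (τ : TTrace) (i : ℕ) (φ : TraceForm) : Prop :=
  SatT w (τ.takeFin i) (τ.drop i) φ

theorem satAt_zero {φ : TraceForm} : SatAt w τ 0 φ ↔ SatT w [] τ φ := by
  simp [SatAt]

theorem satAt_untl {I : Ival} {φ ψ : TraceForm} :
    SatAt w τ i (.untl I φ ψ) ↔
      ∃ j : ℕ, i < j ∧ j ≤ τ.len ∧ SatAt w τ j ψ ∧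
        I.memR (lastTime (τ.takeFin j) - lastTime (τ.takeFin i)) ∧
        ∀ m, i < m → m < j → SatAt w τ m φ := by
  simp only [SatAt, SatT, TTrace.takeFin_append_takeFin_drop, TTrace.drop_drop]
  constructor
  · rintro ⟨k, hk, hlen, hψ, hI, hφ⟩
    refine ⟨i + k, by omega, (TTrace.natCast_le_len_drop hk).1 hlen, hψ, hI, fun m him hmk => ?_⟩
    obtain ⟨d, rfl⟩ := Nat.exists_eq_add_of_le him.le
    exact hφ d (by omega) (by omega)
  · rintro ⟨j, hij, hlen, hψ, hI, hφ⟩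
    obtain ⟨k, rfl⟩ := Nat.exists_eq_add_of_le hij.le
    have hk : 1 ≤ k := by omega
    exact ⟨k, hk, (TTrace.natCast_le_len_drop hk).2 hlen, hψ, hI,
      fun m _ _ => hφ (i + m) (by omega) (by omega)⟩

theorem mtlSat_wordOf_muntil {I : Ival} {φ ψ : MTL} :
    MTLSat (wordOf w τ) i (.muntil I φ ψ) ↔
      ∃ j : ℕ, i < j ∧ j ≤ τ.len ∧ MTLSat (wordOf w τ) j ψ ∧
        I.memR (lastTime (τ.takeFin j) - lastTime (τ.takeFin i)) ∧
        ∀ m, i < m → m < j → MTLSat (wordOf w τ) m φ := by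
  simp only [MTLSat, wordOf_eq_some_iff, Prod.mk.injEq]
  constructor
  · rintro ⟨j, _, _, _, _, hij, ⟨-, -, rfl⟩, ⟨hj, -, rfl⟩, hψ, hI, hφ⟩
    exact ⟨j, hij, hj, hψ, hI, hφ⟩
  · rintro ⟨j, hij, hj, hψ, hI, hφ⟩
    exact ⟨j, _, _, _, _, hij, ⟨(Nat.cast_le.2 hij.le).trans hj, rfl, rfl⟩, ⟨hj, rfl, rfl⟩,
      hψ, hI, hφ⟩

theorem satAt_toTrace_iff_mtlSat_wordOf (φ : MTL) (hi : i ≤ τ.len) :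
    SatAt w τ i φ.toTrace ↔ MTLSat (wordOf w τ) i φ := by
  induction φ generalizing i with
  | atom p =>
    simp [SatAt, SatT, SatS, MTL.toTrace, denotArgs, MTLSat, wordOf_eq_some_iff, hi,
      World.nullaryFluents]
  | mnot φ ih => exact not_congr (ih hi)
  | mand φ ψ ihφ ihψ => exact and_congr (ihφ hi) (ihψ hi)
  | muntil I φ ψ ihφ ihψ =>
    rw [MTL.toTrace, satAt_untl, mtlSat_wordOf_muntil]
    refine exists_congr fun j => and_congr_right fun _ => and_congr_right fun hj => ?_
    have ihφ' (m : ℕ) (hm : m < j) := ihφ ((Nat.cast_le.2 hm.le).trans hj)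
    rw [ihψ hj]
    simp +contextual only [ihφ']

/-! ### Every timed word is the word of a world and a trace -/

noncomputable instance : Encodable Sort3 :=
  .ofInj Sort3.ctorIdx fun s s' h => by cases s <;> cases s' <;> first | rfl | cases h

noncomputable instance : Encodable Name :=
  .ofInj (fun n => (n.sort, n.id)) fun ⟨_, _⟩ ⟨_, _⟩ h => by cases h; rfl

noncomputable instance : Encodable FuncSym :=
  .ofInj (fun f => (f.id, f.sort, f.fluent)) fun ⟨_, _, _⟩ ⟨_, _, _⟩ h => by cases h; rfl

open Classical in
/-- The world in which the nullary fluent `p` holds after a trace of length `n` iff `p ∈ S n`.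
Its function terms denote names whose identifiers encode the terms themselves, as unique names
demand, and its clocks are never reset, so that they all show the current time. -/
noncomputable def World.ofFluents (S : ℕ → Set ℕ) : World where
  fval f args _ := ⟨f.sort, Encodable.encode (f, args)⟩
  pval
    | .fl p, _, z => decide (p ∈ S z.length)
    | _, _, _ => false
  cval _ z := lastTime z
  fval_sort _ _ _ := rfl
  rigid_fun _ _ _ _ _ := rfl
  rigid_pred P hP _ _ _ := by cases P <;> simp_all [PredSym.isFluent]
  unique_names _ _ _ _ _ _ _ _ hne h := hne (Encodable.encode_injective (congrArg Name.id h))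
  clock_init _ := rfl
  clock_prog _ _ _ _ _ := by simp

theorem World.nullaryFluents_ofFluents : (ofFluents S).nullaryFluents z = S z.length := by
  simp [nullaryFluents, ofFluents]

/-- The trace of length `N` whose `i`-th prefix ends at time `t i`, repeating one action. Its first
action happens at `t 1`, so `t 0` has to be the initial time `0`. -/
def TTrace.ofTimes (t : ℕ → ℝ) : ℕ∞ → TTrace
  | ⊤ => .inf fun i => (t (i + 1), 0)
  | (n : ℕ) => .fin (prefixTr (fun i => (t (i + 1), 0)) n)

theorem TTrace.len_ofTimes : (ofTimes t N).len = N := by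
  cases N with
  | top => rfl
  | coe n => exact congrArg Nat.cast (length_prefixTr _ n)

theorem TTrace.lastTime_takeFin_ofTimes (ht : t 0 = 0) (hi : i ≤ N) :
    lastTime ((ofTimes t N).takeFin i) = t i := by
  have takeFin_eq : (ofTimes t N).takeFin i = prefixTr (fun i => (t (i + 1), 0)) i := by
    cases N with
    | top => rfl
    | coe n => exact take_prefixTr _ (Nat.cast_le.1 hi)
  rw [takeFin_eq]
  cases i with
  | zero => exact ht.symm
  | succ i => rw [prefixTr_succ, lastTime_append_singleton]

theorem TTrace.wf_ofTimes (ht : t 0 = 0) (hmono : ∀ i : ℕ, (i + 1 : ℕ) ≤ N → t i ≤ t (i + 1)) :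
    (ofTimes t N).WF := by
  rw [wf_iff_lastTime_takeFin, len_ofTimes]
  intro i hi
  rw [lastTime_takeFin_ofTimes ht hi,
    lastTime_takeFin_ofTimes ht ((Nat.cast_le.2 i.le_succ).trans hi)]
  exact hmono i hi

theorem wordOf_ofFluents_ofTimes_eq_some_iff (ht : t 0 = 0) {x : Set ℕ × ℝ} :
    wordOf (.ofFluents S) (.ofTimes t N) i = some x ↔ i ≤ N ∧ (S i, t i) = x := by
  rw [wordOf_eq_some_iff, TTrace.len_ofTimes]
  refine and_congr_right fun hi => ?_
  rw [World.nullaryFluents_ofFluents, TTrace.lastTime_takeFin_ofTimes ht hi,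
    TTrace.length_takeFin (by rwa [TTrace.len_ofTimes])]

theorem TWordWF.exists_ne_none_iff_le (hρ : TWordWF ρ) :
    ∃ N : ℕ∞, ∀ i : ℕ, ρ i ≠ none ↔ i ≤ N := by
  have lower : IsLowerSet {i | ρ i ≠ none} := fun j i hij hj =>
    Nat.decreasingInduction (motive := fun i _ => ρ i ≠ none) (fun k _ => hρ.closed k) hj hij
  obtain ⟨_, h0⟩ := hρ.init
  rcases lower.eq_univ_or_Iio with huniv | ⟨_ | n, hn⟩
  · exact ⟨⊤, fun i => by simpa using huniv.ge (Set.mem_univ i)⟩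
  · simpa [h0] using Set.ext_iff.1 hn 0
  · exact ⟨n, fun i => by simpa [Nat.lt_succ_iff] using Set.ext_iff.1 hn i⟩

theorem TWordWF.exists_eq_some_iff (hρ : TWordWF ρ) :
    ∃ (N : ℕ∞) (S : ℕ → Set ℕ) (t : ℕ → ℝ), ∀ (i : ℕ) x, ρ i = some x ↔ i ≤ N ∧ (S i, t i) = x := by
  obtain ⟨N, hN⟩ := hρ.exists_ne_none_iff_le
  refine ⟨N, fun i => ((ρ i).getD (∅, 0)).1, fun i => ((ρ i).getD (∅, 0)).2, fun i x => ?_⟩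
  rw [← hN i]
  cases h : ρ i <;> simp [h]

theorem TWordWF.exists_wordOf_eq (hρ : TWordWF ρ) :
    ∃ (w : World) (τ : TTrace), τ.WF ∧ wordOf w τ = ρ := by
  obtain ⟨N, S, t, hρ_iff⟩ := hρ.exists_eq_some_iff
  have ht : t 0 = 0 := by
    obtain ⟨s, h0⟩ := hρ.init
    exact congrArg Prod.snd ((hρ_iff 0 _).1 h0).2
  have hmono (i : ℕ) (hi : (i + 1 : ℕ) ≤ N) : t i ≤ t (i + 1) :=
    hρ.mono i _ _ _ _ ((hρ_iff i _).2 ⟨(Nat.cast_le.2 i.le_succ).trans hi, rfl⟩)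
      ((hρ_iff (i + 1) _).2 ⟨hi, rfl⟩)
  refine ⟨.ofFluents S, .ofTimes t N, TTrace.wf_ofTimes ht hmono, ?_⟩
  ext1 i
  ext1 x
  rw [wordOf_ofFluents_ofTimes_eq_some_iff ht, hρ_iff]

/-- For every MTL sentence `φ` (over atomic propositions
identified with nullary fluents): `φ` is valid in MTL (pointwise semantics
over timed words) if and only if `φ` is valid as a trace formula in t-ESG
(i.e. `w, ⟨⟩, τ ⊨ φ` for every t-ESG world `w` and every trace `τ`). -/
theorem mtl_tesg_validity_equivalence (φ : MTL) :
    MTLValid φ ↔ ∀ (w : World) (τ : TTrace), τ.WF → SatT w [] τ φ.toTrace := by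
  have sat_iff (w : World) (τ : TTrace) : SatT w [] τ φ.toTrace ↔ MTLSat (wordOf w τ) 0 φ :=
    satAt_zero.symm.trans (satAt_toTrace_iff_mtlSat_wordOf φ zero_le)
  simp only [sat_iff]
  constructor
  · intro valid w τ hτ
    exact valid _ (hτ.tWordWF_wordOf w)
  · intro valid ρ hρ
    obtain ⟨w, τ, hτ, rfl⟩ := hρ.exists_wordOf_eq
    exact valid w τ hτ

end TESG
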